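/- Let (a,b) ⊆ ℝ and W : (a,b) → Matrix N N ℂ a smooth Hermitian-valued density, invertible on the closure of (a,b), with finite moments. Let D(y) = y''F₂ + y'F₁ + yF₀ with F₂, F₁, F₀ matrix rational functions with no poles in the closure of (a,b) and F₂(t) invertible on (a,b), satisfying F₂W = WF₂*, 2(F₂W)' = WF₁* + F₁W, and the boundary condition lim_{x→a⁺,b⁻} p(x)(F₂(x)W(x))* = 0 for all matrix rational p without poles in the closure of (a,b). Let X ⊆ ℕ be finite and Pₙ, n ∈ ℕ∖X, matrix polynomials of degree n with nonsingular leading coefficients, orthogonal with respect to W and satisfying D(Pₙ) = Γₙ·Pₙ. Let P be twice differentiable with D(P) = 0, invertible on the closure of (a,b), satisfying ((1/2)F₁ + P⁻¹P'F₂)W = W((1/2)F₁ + P⁻¹P'F₂)*, and suppose there is a matrix polynomial U such that (P')⁻¹PU is a matrix polynomial whose determinant has no zeros in the closure of (a,b). Define 𝒜(y) = y'(P')⁻¹PU − yU, ℬ(y) = [(y·U⁻¹P⁻¹P'F₂·W)' + y·U⁻¹P⁻¹P'F₂·W·(P⁻¹P')*]·W⁻¹, 𝒟(y) = 𝒜(ℬ(y)),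 𝒫ₙ = 𝒜(Pₙ), and 𝒲 = (U⁻¹P⁻¹P')·F₂W·(U⁻¹P⁻¹P')*. Then: (i) 𝒟 is symmetric with respect to the pair (𝒲,𝔸), where 𝔸 is the left linear span of the 𝒫ₙ, n ∈ ℕ∖X; (ii) ∫_a^b 𝒫ₙ·𝒲·𝒫ₘ* dt = 0 for all n ≠ m in ℕ∖X; and (iii) 𝒟(𝒫ₙ) = Γₙ·𝒫ₙ for all n ∈ ℕ∖X. -/

import Mathlib

/-!
Write `φ = F₂W` and `F = P⁻¹P'`. On the open interval `F = UV⁻¹` with `V = (P')⁻¹PU`, so `F` is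
rational without poles on the closed interval, and `𝒜(y) = (y' - yF)V`, `𝒲 = V⁻¹φ(V⁻¹)*`.

* Algebra. The symmetry equations for `F₂W` and the compatibility condition on `P` give
  `φ' + φF* = F₁W + Fφ`, and `D(P) = 0` gives `(F' + F²)F₂ + FF₁ + F₀ = 0`. Together they yield
  `((y' - yF)φ)' + (y' - yF)φF* = D(y)W` (`intertwine_alg`), that is `ℬ ∘ 𝒜 = D`
  (`DarbouxData.bop_aop`). Hence `𝒟 ∘ 𝒜 = 𝒜 ∘ D`, which is the eigenvalue statement.
* Analysis. The same identity reads
  `((x' - xF)φ y*)' = D(x)W y* + 𝒜(x)𝒲𝒜(y)*`. The boundary condition kills the total derivative,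
  so `∫ 𝒜(x)𝒲𝒜(y)* = -∫ D(x)W y*` (`DarbouxData.integral_aop`), whenever `x, y` are matrix
  polynomials and `D(x)` is one. Orthogonality follows from that of the `Pₙ`. For symmetry, use this
  formula and its conjugate: both sides equal `-∫ D(p)W D(q)*`.
* Integrability. Since the boundary condition allows an arbitrary rational factor, it also holds
  with an extra `1 + t²`, so each rational multiple of `φ` is dominated by a multiple of
  `(1 + t²)⁻¹` and is integrable, for finite and infinite ends alike (`integrableOn_rat_mul`).
-/

open MeasureTheory Filter Polynomial Matrix

noncomputable section

abbrev Mat (N : ℕ) := Matrix (Fin N) (Fin N) ℂ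

abbrev MatPoly (N : ℕ) := Matrix (Fin N) (Fin N) (Polynomial ℂ)

def mpEval {N : ℕ} (P : MatPoly N) (t : ℝ) : Mat N :=
  Matrix.of fun i j => (P i j).eval (t : ℂ)

def matDeriv {N : ℕ} (f : ℝ → Mat N) : ℝ → Mat N :=
  fun t => Matrix.of fun i j => deriv (fun s => f s i j) t

def secondOrd {N : ℕ} (F₀ F₁ F₂ : ℝ → Mat N) (y : ℝ → Mat N) : ℝ → Mat N :=
  fun t => matDeriv (matDeriv y) t * F₂ t + matDeriv y t * F₁ t + y t * F₀ t

def DiffOn {N : ℕ} (S : Set ℝ) (f : ℝ → Mat N) : Prop :=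
  ∀ (i j : Fin N), ∀ t ∈ S, DifferentiableAt ℝ (fun s => f s i j) t

def TwiceDiffOn {N : ℕ} (S : Set ℝ) (f : ℝ → Mat N) : Prop :=
  DiffOn S f ∧ DiffOn S (matDeriv f)

def IsRatOn (S : Set ℝ) (f : ℝ → ℂ) : Prop :=
  ∃ p q : Polynomial ℂ, ∀ t ∈ S,
    q.eval (t : ℂ) ≠ 0 ∧ f t = p.eval (t : ℂ) / q.eval (t : ℂ)

def IsMatRatOn {N : ℕ} (S : Set ℝ) (f : ℝ → Mat N) : Prop :=
  ∀ (i j : Fin N), IsRatOn S (fun t => f t i j)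

def leftEnd (a : EReal) : Filter ℝ :=
  comap (fun t : ℝ => (t : EReal)) (nhdsWithin a (Set.Ioi a))

def rightEnd (b : EReal) : Filter ℝ :=
  comap (fun t : ℝ => (t : EReal)) (nhdsWithin b (Set.Iio b))

/-- The left linear span (finite sums `∑ Aₙ fₙ` with constant matrices `Aₙ`) of a family of
matrix-valued functions indexed by `ℕ ∖ X`. -/
def leftSpanF {N : ℕ} (f : ℕ → ℝ → Mat N) (X : Finset ℕ) : Set (ℝ → Mat N) :=
  {g | ∃ (s : Finset ℕ) (A : ℕ → Mat N), (∀ n ∈ s, n ∉ X) ∧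
        g = fun t => ∑ n ∈ s, A n * f n t}

/-- `𝒜(y) = y'(P')⁻¹PU − yU`. -/
def Aop {N : ℕ} (P : ℝ → Mat N) (U : MatPoly N) (y : ℝ → Mat N) : ℝ → Mat N :=
  fun t => matDeriv y t * ((matDeriv P t)⁻¹ * P t * mpEval U t) - y t * mpEval U t

/-- `U⁻¹P⁻¹P'`. -/
def Kfun {N : ℕ} (P : ℝ → Mat N) (U : MatPoly N) : ℝ → Mat N :=
  fun t => (mpEval U t)⁻¹ * (P t)⁻¹ * matDeriv P t

/-- `ℬ(y) = [(y·U⁻¹P⁻¹P'F₂·W)' + y·U⁻¹P⁻¹P'F₂·W·(P⁻¹P')*]·W⁻¹`. -/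
def Bop {N : ℕ} (W P F₂ : ℝ → Mat N) (U : MatPoly N) (y : ℝ → Mat N) : ℝ → Mat N :=
  fun t => (matDeriv (fun s => y s * Kfun P U s * F₂ s * W s) t
      + y t * Kfun P U t * F₂ t * W t * ((P t)⁻¹ * matDeriv P t)ᴴ) * (W t)⁻¹

/-- `𝒟 = 𝒜 ∘ ℬ`. -/
def Dcal {N : ℕ} (W P F₂ : ℝ → Mat N) (U : MatPoly N) (y : ℝ → Mat N) : ℝ → Mat N :=
  Aop P U (Bop W P F₂ U y)

/-- the exceptional weight `𝒲 = (U⁻¹P⁻¹P')·F₂W·(U⁻¹P⁻¹P')*`. -/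
def Wexc {N : ℕ} (W P F₂ : ℝ → Mat N) (U : MatPoly N) : ℝ → Mat N :=
  fun t => Kfun P U t * (F₂ t * W t) * (Kfun P U t)ᴴ

/-! ### Entrywise calculus for matrix functions -/

/-- Entrywise derivative of a matrix function at a point. -/
def HasMD {N : ℕ} (f : ℝ → Mat N) (f' : Mat N) (t : ℝ) : Prop :=
  ∀ i j, HasDerivAt (fun s => f s i j) (f' i j) t

section Calculus

variable {N : ℕ} {f g : ℝ → Mat N} {f' g' : Mat N} {t : ℝ}

lemma HasMD.matDeriv_eq (h : HasMD f f' t) : matDeriv f t = f' := by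
  ext i j
  exact (h i j).deriv

lemma DiffOn.hasMD {S : Set ℝ} (h : DiffOn S f) (ht : t ∈ S) : HasMD f (matDeriv f t) t :=
  fun i j => (h i j t ht).hasDerivAt

lemma HasMD.sub (hf : HasMD f f' t) (hg : HasMD g g' t) :
    HasMD (fun s => f s - g s) (f' - g') t :=
  fun i j => (hf i j).sub (hg i j)

lemma HasMD.mul (hf : HasMD f f' t) (hg : HasMD g g' t) :
    HasMD (fun s => f s * g s) (f' * g t + f t * g') t := by
  intro i j
  simp only [Matrix.mul_apply, Matrix.add_apply, ← Finset.sum_add_distrib]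
  exact HasDerivAt.fun_sum fun k _ => (hf i k).mul (hg k j)

lemma HasMD.conjTranspose (hf : HasMD f f' t) : HasMD (fun s => (f s)ᴴ) f'ᴴ t :=
  fun i j => (hf j i).star

lemma HasMD.congr (hf : HasMD f f' t) (h : g =ᶠ[nhds t] f) : HasMD g f' t :=
  fun i j => (hf i j).congr_of_eventuallyEq (h.mono fun _ hs => congrFun (congrFun hs i) j)

lemma matDeriv_congr (h : g =ᶠ[nhds t] f) : matDeriv g t = matDeriv f t := by
  ext i j
  have hij : (fun s => g s i j) =ᶠ[nhds t] fun s => f s i j :=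
    h.mono fun _ hs => congrFun (congrFun hs i) j
  exact hij.deriv_eq

end Calculus

/-! ### Evaluation of matrix polynomials -/

section Eval

variable {N : ℕ}

lemma mpEval_eq_mapMatrix (p : MatPoly N) (t : ℝ) :
    mpEval p t = (Polynomial.evalRingHom (t : ℂ)).mapMatrix p := rfl

lemma mpEval_const_mul (A : Mat N) (p : MatPoly N) (t : ℝ) :
    mpEval (A.map Polynomial.C * p) t = A * mpEval p t := by
  rw [mpEval_eq_mapMatrix, map_mul, ← mpEval_eq_mapMatrix p]
  congr 1
  ext i j
  simp

lemma mpEval_sum {ι : Type*} (s : Finset ι) (p : ι → MatPoly N) (t : ℝ) :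
    mpEval (∑ n ∈ s, p n) t = ∑ n ∈ s, mpEval (p n) t := by
  simp only [mpEval_eq_mapMatrix, map_sum]

lemma hasMD_mpEval (p : MatPoly N) (t : ℝ) :
    HasMD (mpEval p) (mpEval (p.map Polynomial.derivative) t) t :=
  fun i j => ((p i j).hasDerivAt (t : ℂ)).comp_ofReal

lemma matDeriv_mpEval (p : MatPoly N) :
    matDeriv (mpEval p) = mpEval (p.map Polynomial.derivative) :=
  funext fun t => (hasMD_mpEval p t).matDeriv_eq

end Eval

/-! ### Rational functions without poles on a set -/

section Rational

variable {N : ℕ} {T : Set ℝ}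

lemma eval_map_conj (r : Polynomial ℂ) (t : ℝ) :
    (r.map (starRingEnd ℂ)).eval (t : ℂ) = Star.star (r.eval (t : ℂ)) := by
  have := Polynomial.eval_map_apply (f := starRingEnd ℂ) (p := r) (t : ℂ)
  simpa using this

lemma IsRatOn.poly (p : Polynomial ℂ) : IsRatOn T (fun t => p.eval (t : ℂ)) :=
  ⟨p, 1, fun t _ => by simp⟩

lemma IsRatOn.mul {f g : ℝ → ℂ} (hf : IsRatOn T f) (hg : IsRatOn T g) :
    IsRatOn T (fun t => f t * g t) := by
  obtain ⟨p, q, h⟩ := hf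
  obtain ⟨p', q', h'⟩ := hg
  refine ⟨p * p', q * q', fun t ht => ?_⟩
  obtain ⟨h1, h2⟩ := h t ht
  obtain ⟨h3, h4⟩ := h' t ht
  simp only [Polynomial.eval_mul, h2, h4]
  exact ⟨mul_ne_zero h1 h3, by field_simp⟩

lemma IsRatOn.add {f g : ℝ → ℂ} (hf : IsRatOn T f) (hg : IsRatOn T g) :
    IsRatOn T (fun t => f t + g t) := by
  obtain ⟨p, q, h⟩ := hf
  obtain ⟨p', q', h'⟩ := hg
  refine ⟨p * q' + p' * q, q * q', fun t ht => ?_⟩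
  obtain ⟨h1, h2⟩ := h t ht
  obtain ⟨h3, h4⟩ := h' t ht
  simp only [Polynomial.eval_mul, Polynomial.eval_add, h2, h4]
  exact ⟨mul_ne_zero h1 h3, by field_simp⟩

lemma IsRatOn.sum {ι : Type*} (s : Finset ι) {f : ι → ℝ → ℂ} (hf : ∀ i ∈ s, IsRatOn T (f i)) :
    IsRatOn T (fun t => ∑ i ∈ s, f i t) := by
  classical
  induction s using Finset.induction_on with
  | empty => exact ⟨0, 1, fun t _ => by simp⟩
  | insert a s ha ih =>
    simp only [Finset.sum_insert ha]
    exact (hf a (by simp)).add (ih fun i hi => hf i (by simp [hi]))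

/-- On the real line the conjugate of a polynomial is the polynomial with conjugated
coefficients, so conjugates of rational functions are rational. -/
lemma IsRatOn.star {f : ℝ → ℂ} (hf : IsRatOn T f) : IsRatOn T (fun t => Star.star (f t)) := by
  obtain ⟨p, q, h⟩ := hf
  refine ⟨p.map (starRingEnd ℂ), q.map (starRingEnd ℂ), fun t ht => ?_⟩
  obtain ⟨h1, h2⟩ := h t ht
  simp only [eval_map_conj, h2]
  exact ⟨by simpa using h1, by simp⟩

lemma IsRatOn.differentiableAt {S : Set ℝ} {f : ℝ → ℂ} (hf : IsRatOn T f) (hS : IsOpen S)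
    (hST : S ⊆ T) {t : ℝ} (ht : t ∈ S) : DifferentiableAt ℝ f t := by
  obtain ⟨p, q, h⟩ := hf
  have hp : ∀ r : Polynomial ℂ, DifferentiableAt ℝ (fun s : ℝ => r.eval (s : ℂ)) t :=
    fun r => (r.hasDerivAt (t : ℂ)).comp_ofReal.differentiableAt
  refine ((hp p).div (hp q) (h t (hST ht)).1).congr_of_eventuallyEq ?_
  filter_upwards [hS.mem_nhds ht] with s hs using (h s (hST hs)).2

lemma IsMatRatOn.poly (p : MatPoly N) : IsMatRatOn T (mpEval p) :=
  fun i j => IsRatOn.poly (p i j)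

lemma IsMatRatOn.mul {f g : ℝ → Mat N} (hf : IsMatRatOn T f) (hg : IsMatRatOn T g) :
    IsMatRatOn T (fun t => f t * g t) := by
  intro i j
  simp only [Matrix.mul_apply]
  exact IsRatOn.sum _ fun k _ => (hf i k).mul (hg k j)

lemma IsMatRatOn.sub {f g : ℝ → Mat N} (hf : IsMatRatOn T f) (hg : IsMatRatOn T g) :
    IsMatRatOn T (fun t => f t - g t) := by
  intro i j
  have h := (hf i j).add ((IsRatOn.poly (-1)).mul (hg i j))
  simpa [sub_eq_add_neg] using h

lemma IsMatRatOn.inv {V : MatPoly N} (hV : ∀ t ∈ T, IsUnit (mpEval V t)) :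
    IsMatRatOn T (fun t => (mpEval V t)⁻¹) := by
  intro i j
  refine ⟨V.adjugate i j, V.det, fun t ht => ?_⟩
  have hdet : (V.det).eval (t : ℂ) = (mpEval V t).det :=
    RingHom.map_det (Polynomial.evalRingHom (t : ℂ)) V
  have hadj : (V.adjugate i j).eval (t : ℂ) = (mpEval V t).adjugate i j :=
    congrFun (congrFun (RingHom.map_adjugate (Polynomial.evalRingHom (t : ℂ)) V) i) j
  have hu := (Matrix.isUnit_iff_isUnit_det _).1 (hV t ht)
  rw [hdet, hadj]
  refine ⟨hu.ne_zero, ?_⟩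
  simp only [Matrix.inv_def, Ring.inverse_eq_inv', Matrix.smul_apply, smul_eq_mul]
  rw [div_eq_inv_mul]

end Rational

/-! ### Integration over an interval with possibly infinite ends -/

section Interval

variable {a b : EReal}

lemma leftEnd_neBot (hab : a < b) : (leftEnd a).NeBot := by
  refine comap_neBot fun s hs => ?_
  obtain ⟨u, hu, hsub⟩ := (mem_nhdsGT_iff_exists_Ioo_subset' hab).1 hs
  obtain ⟨x, h1, h2⟩ := EReal.lt_iff_exists_real_btwn.1 hu
  exact ⟨x, hsub ⟨h1, h2⟩⟩

lemma rightEnd_neBot (hab : a < b) : (rightEnd b).NeBot := by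
  refine comap_neBot fun s hs => ?_
  obtain ⟨u, hu, hsub⟩ := (mem_nhdsLT_iff_exists_Ioo_subset' hab).1 hs
  obtain ⟨x, h1, h2⟩ := EReal.lt_iff_exists_real_btwn.1 hu
  exact ⟨x, hsub ⟨h1, h2⟩⟩

instance (a : EReal) : (leftEnd a).IsCountablyGenerated := by unfold leftEnd; infer_instance

instance (b : EReal) : (rightEnd b).IsCountablyGenerated := by unfold rightEnd; infer_instance

lemma eventually_leftEnd {c : EReal} (h : a < c) :
    ∀ᶠ t : ℝ in leftEnd a, a < (t : EReal) ∧ (t : EReal) < c :=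
  tendsto_comap.eventually (Ioo_mem_nhdsGT h)

lemma eventually_rightEnd {c : EReal} (h : c < b) :
    ∀ᶠ t : ℝ in rightEnd b, c < (t : EReal) ∧ (t : EReal) < b :=
  tendsto_comap.eventually (Ioo_mem_nhdsLT h)

lemma isOpen_interval (a b : EReal) : IsOpen {t : ℝ | a < (t : EReal) ∧ (t : EReal) < b} :=
  (isOpen_lt continuous_const continuous_coe_real_ereal).inter
    (isOpen_lt continuous_coe_real_ereal continuous_const)

lemma Icc_subset_interval {u v : ℝ} (hu : a < (u : EReal)) (hv : (v : EReal) < b) :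
    Set.Icc u v ⊆ {t : ℝ | a < (t : EReal) ∧ (t : EReal) < b} :=
  fun _ ht => ⟨hu.trans_le (EReal.coe_le_coe_iff.2 ht.1),
    (EReal.coe_le_coe_iff.2 ht.2).trans_lt hv⟩

/-- A total derivative whose primitive vanishes at both (possibly infinite) ends integrates to
zero. The intervals `(u, v]` with `u → a`, `v → b` exhaust the domain. -/
lemma integral_deriv_eq_zero (hab : a < b) {f f' : ℝ → ℂ}
    (hd : ∀ t : ℝ, a < (t : EReal) → (t : EReal) < b → HasDerivAt f (f' t) t)
    (hi : IntegrableOn f' {t : ℝ | a < (t : EReal) ∧ (t : EReal) < b})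
    (hl : Tendsto f (leftEnd a) (nhds 0)) (hr : Tendsto f (rightEnd b) (nhds 0)) :
    ∫ t in {t : ℝ | a < (t : EReal) ∧ (t : EReal) < b}, f' t = 0 := by
  have := leftEnd_neBot hab
  have := rightEnd_neBot hab
  set S := {t : ℝ | a < (t : EReal) ∧ (t : EReal) < b} with hS
  have hSm : MeasurableSet S := (isOpen_interval a b).measurableSet
  have hcover : AECover (volume.restrict S) (leftEnd a ×ˢ rightEnd b)
      (fun x : ℝ × ℝ => Set.Ioc x.1 x.2) := by
    refine ⟨?_, fun _ => measurableSet_Ioc⟩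
    filter_upwards [ae_restrict_mem hSm] with t ht
    refine ((eventually_leftEnd ht.1).prod_mk (eventually_rightEnd ht.2)).mono ?_
    rintro ⟨u, v⟩ ⟨h1, h2⟩
    exact ⟨EReal.coe_lt_coe_iff.1 h1.2, (EReal.coe_lt_coe_iff.1 h2.1).le⟩
  have h1 := hcover.integral_tendsto_of_countably_generated hi
  have h2 : Tendsto (fun x : ℝ × ℝ => f x.2 - f x.1) (leftEnd a ×ˢ rightEnd b) (nhds 0) := by
    simpa using (hr.comp tendsto_snd).sub (hl.comp tendsto_fst)
  refine tendsto_nhds_unique h1 (h2.congr' ?_)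
  obtain ⟨c, hac, hcb⟩ := EReal.lt_iff_exists_real_btwn.1 hab
  refine ((eventually_leftEnd hac).prod_mk (eventually_rightEnd hcb)).mono ?_
  rintro ⟨u, v⟩ ⟨h1, h2⟩
  have huv : u ≤ v := EReal.coe_le_coe_iff.1 (h1.2.trans h2.1).le
  have hsub : Set.Icc u v ⊆ S := Icc_subset_interval h1.1 h2.2
  have hres : (volume.restrict S).restrict (Set.Ioc u v) = volume.restrict (Set.Ioc u v) :=
    Measure.restrict_restrict_of_subset (Set.Ioc_subset_Icc_self.trans hsub)
  simp only [hres]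
  rw [← intervalIntegral.integral_of_le huv,
    intervalIntegral.integral_eq_sub_of_hasDerivAt (f := f) ?_ ?_]
  · intro t ht
    rw [Set.uIcc_of_le huv] at ht
    exact hd t (hsub ht).1 (hsub ht).2
  · rw [intervalIntegrable_iff_integrableOn_Ioc_of_le huv]
    exact hi.mono_set (Set.Ioc_subset_Icc_self.trans hsub)

/-- If `(1 + t²) ψ(t)` vanishes at both ends, then `ψ` is dominated by a multiple of
`(1 + t²)⁻¹`, hence integrable whether or not the ends are finite. -/
lemma integrableOn_of_decay (hab : a < b) {ψ : ℝ → ℂ}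
    (hc : ContinuousOn ψ {t : ℝ | a < (t : EReal) ∧ (t : EReal) < b})
    (hl : Tendsto (fun t : ℝ => (1 + (t : ℂ) ^ 2) * ψ t) (leftEnd a) (nhds 0))
    (hr : Tendsto (fun t : ℝ => (1 + (t : ℂ) ^ 2) * ψ t) (rightEnd b) (nhds 0)) :
    IntegrableOn ψ {t : ℝ | a < (t : EReal) ∧ (t : EReal) < b} := by
  set S := {t : ℝ | a < (t : EReal) ∧ (t : EReal) < b} with hS
  have hSm : MeasurableSet S := (isOpen_interval a b).measurableSet
  set χ : ℝ → ℂ := fun t => (1 + (t : ℂ) ^ 2) * ψ t with hχ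
  have hχc : ContinuousOn χ S := ContinuousOn.mul (by fun_prop) hc
  have hbound : ∃ C, ∀ t ∈ S, ‖χ t‖ ≤ C := by
    have el : ∀ᶠ t in leftEnd a, ‖χ t‖ < 1 := hl.norm.eventually_lt_const (by simp)
    have er : ∀ᶠ t in rightEnd b, ‖χ t‖ < 1 := hr.norm.eventually_lt_const (by simp)
    obtain ⟨s, hs, hs'⟩ := mem_comap.1 el
    obtain ⟨u, hu, hsu⟩ := (mem_nhdsGT_iff_exists_Ioo_subset' hab).1 hs
    obtain ⟨s', hss, hss'⟩ := mem_comap.1 er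
    obtain ⟨v, hv, hsv⟩ := (mem_nhdsLT_iff_exists_Ioo_subset' hab).1 hss
    obtain ⟨c, hac, hcu⟩ := EReal.lt_iff_exists_real_btwn.1 (lt_min hu hab)
    obtain ⟨d, hvd, hdb⟩ := EReal.lt_iff_exists_real_btwn.1 (max_lt hv hab)
    obtain ⟨C, hC⟩ := isCompact_Icc.exists_bound_of_continuousOn
      (hχc.mono (Icc_subset_interval hac hdb))
    refine ⟨max C 1, fun t ht => ?_⟩
    rcases lt_or_ge t c with h | h
    · exact le_max_of_le_right (hs' (hsu ⟨ht.1, ((EReal.coe_lt_coe_iff.2 h).trans hcu).trans_le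
        (min_le_left _ _)⟩ : (t : EReal) ∈ s)).le
    rcases lt_or_ge d t with h' | h'
    · exact le_max_of_le_right (hss' (hsv ⟨(le_max_left _ _).trans_lt
        (hvd.trans (EReal.coe_lt_coe_iff.2 h')), ht.2⟩ : (t : EReal) ∈ s')).le
    · exact le_max_of_le_left (hC t ⟨h, h'⟩)
  obtain ⟨C, hC⟩ := hbound
  refine Integrable.mono' ((integrable_inv_one_add_sq.const_mul C).integrableOn)
    (hc.aestronglyMeasurable hSm) ?_
  filter_upwards [ae_restrict_mem hSm] with t ht
  have hpos : 0 < 1 + t ^ 2 := by positivity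
  have hn : ‖(1 + (t : ℂ) ^ 2)‖ = 1 + t ^ 2 := by
    rw [show (1 + (t : ℂ) ^ 2) = ((1 + t ^ 2 : ℝ) : ℂ) by push_cast; ring, Complex.norm_real,
      Real.norm_of_nonneg hpos.le]
  have := hC t ht
  rw [hχ, norm_mul, hn] at this
  rw [← div_eq_mul_inv, le_div_iff₀ hpos, mul_comm]
  exact this

end Interval

/-! ### Sesquilinear expressions in a decaying weight -/

section Sesquilinear

variable {N : ℕ} {a b : EReal} {T : Set ℝ} {φ : ℝ → Mat N}

lemma mul_mul_conjTranspose_apply (p m q : Mat N) (i j : Fin N) :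
    (p * m * qᴴ) i j = ∑ l, ∑ k, (p i k * star (q j l)) * m k l := by
  simp only [Matrix.mul_apply, Matrix.conjTranspose_apply, Finset.sum_mul]
  exact Finset.sum_congr rfl fun l _ => Finset.sum_congr rfl fun k _ => by ring

lemma tendsto_sesq {L : Filter ℝ}
    (h : ∀ r, IsRatOn T r → ∀ i j, Tendsto (fun t => r t * φ t i j) L (nhds 0))
    {p q : ℝ → Mat N} (hp : IsMatRatOn T p) (hq : IsMatRatOn T q) (i j : Fin N) :
    Tendsto (fun t => (p t * φ t * (q t)ᴴ) i j) L (nhds 0) := by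
  simp only [mul_mul_conjTranspose_apply]
  have h0 : (0 : ℂ) = ∑ _l : Fin N, ∑ _k : Fin N, (0 : ℂ) := by simp
  rw [h0]
  exact tendsto_finsetSum _ fun l _ => tendsto_finsetSum _ fun k _ =>
    h _ ((hp i k).mul (hq j l).star) k l

lemma integrableOn_sesq {S : Set ℝ} {R : (ℝ → ℂ) → Prop} {φ p q : ℝ → Mat N}
    (h : ∀ r, R r → ∀ i j, IntegrableOn (fun t => r t * φ t i j) S)
    (hpq : ∀ i j k l, R fun t => p t i k * star (q t j l)) (i j : Fin N) :
    IntegrableOn (fun t => (p t * φ t * (q t)ᴴ) i j) S := by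
  simp only [mul_mul_conjTranspose_apply]
  exact integrable_finsetSum _ fun l _ => integrable_finsetSum _ fun k _ =>
    h _ (hpq i j k l) k l

/-- Every multiple of the weight by a rational function without poles on the closed interval is
integrable, because the boundary condition may be applied to the multiple by `1 + t²`. -/
lemma integrableOn_rat_mul (hab : a < b)
    (hφ : DiffOn {t : ℝ | a < (t : EReal) ∧ (t : EReal) < b} φ)
    (hT : {t : ℝ | a < (t : EReal) ∧ (t : EReal) < b} ⊆ T)
    (hl : ∀ r, IsRatOn T r → ∀ i j, Tendsto (fun t => r t * φ t i j) (leftEnd a) (nhds 0))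
    (hr : ∀ r, IsRatOn T r → ∀ i j, Tendsto (fun t => r t * φ t i j) (rightEnd b) (nhds 0))
    (r : ℝ → ℂ) (h : IsRatOn T r) (i j : Fin N) :
    IntegrableOn (fun t => r t * φ t i j) {t : ℝ | a < (t : EReal) ∧ (t : EReal) < b} := by
  have h2 : IsRatOn T (fun t => (1 + (t : ℂ) ^ 2) * r t) := by
    have h1 := (IsRatOn.poly (T := T) (1 + Polynomial.X ^ 2)).mul h
    simp only [Polynomial.eval_add, Polynomial.eval_pow, Polynomial.eval_X,
      Polynomial.eval_one] at h1
    exact h1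
  refine integrableOn_of_decay hab (fun t ht => ?_) ?_ ?_
  · exact ((h.differentiableAt (isOpen_interval a b) hT ht).mul
      (hφ i j t ht)).continuousAt.continuousWithinAt
  · simpa only [mul_assoc] using hl _ h2 i j
  · simpa only [mul_assoc] using hr _ h2 i j

end Sesquilinear

lemma integrableOn_poly_mul {S : Set ℝ} {w : ℝ → ℂ}
    (h : ∀ n : ℕ, IntegrableOn (fun t : ℝ => (t : ℂ) ^ n * w t) S) (r : Polynomial ℂ) :
    IntegrableOn (fun t : ℝ => r.eval (t : ℂ) * w t) S := by
  simp only [Polynomial.eval_eq_sum_range, Finset.sum_mul, mul_assoc]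
  exact integrable_finsetSum _ fun n _ => (h n).const_mul _

/-! ### The factorization of the operator -/

/-- The pointwise identity behind `ℬ ∘ 𝒜 = D`. Here `φ = F₂W`, `F = P⁻¹P'`, the primed letters
are derivatives, `P₁, P₂` are the derivatives of `P` and `X₀, X₁, X₂` those of the argument. -/
lemma intertwine_alg {N : ℕ} {W F₀ F₁ F₂ φ φ' F F' P P₁ P₂ : Mat N} (X₀ X₁ X₂ : Mat N)
    (hφ : φ = F₂ * W) (hφs : φ = W * F₂ᴴ)
    (hφ' : (2 : ℂ) • φ' = W * F₁ᴴ + F₁ * W)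
    (hc : ((1 / 2 : ℂ) • F₁ + F * F₂) * W = W * ((1 / 2 : ℂ) • F₁ + F * F₂)ᴴ)
    (hP : IsUnit P) (h1 : P * F = P₁) (h2 : P₁ * F + P * F' = P₂)
    (hker : P₂ * F₂ + P₁ * F₁ + P * F₀ = 0) :
    ((X₂ - (X₁ * F + X₀ * F')) * φ + (X₁ - X₀ * F) * φ') + (X₁ - X₀ * F) * φ * Fᴴ
      = (X₂ * F₂ + X₁ * F₁ + X₀ * F₀) * W := by
  have hc' : φ' + φ * Fᴴ = F₁ * W + F * φ := by
    have hc2 : (1 / 2 : ℂ) • (F₁ * W) + F * φ = (1 / 2 : ℂ) • (W * F₁ᴴ) + φ * Fᴴ := by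
      have hstar : star (1 / 2 : ℂ) = 1 / 2 := by simp
      rw [Matrix.conjTranspose_add, Matrix.conjTranspose_smul, Matrix.conjTranspose_mul, hstar,
        add_mul, mul_add, ← mul_assoc W, ← hφs, mul_assoc F, ← hφ] at hc
      simpa using hc
    have hc3 : (2 : ℂ) • (φ' + φ * Fᴴ) = (2 : ℂ) • (F₁ * W + F * φ) := by
      linear_combination (norm := module) hφ' - (2 : ℂ) • hc2
    exact smul_right_injective _ (two_ne_zero : (2 : ℂ) ≠ 0) hc3
  have hk : (F' + F * F) * F₂ + F * F₁ + F₀ = 0 := by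
    apply hP.mul_left_cancel
    rw [mul_zero, ← hker, ← h2, ← h1]
    noncomm_ring
  have hk' : F₀ = -((F' + F * F) * F₂ + F * F₁) := by
    rw [eq_neg_iff_add_eq_zero, ← hk]; abel
  have hφ'' : φ' = F₁ * W + F * φ - φ * Fᴴ := by rw [← hc']; abel
  rw [hk', hφ'', hφ]
  noncomm_ring

/-- The data of the transformation, on the open interval `(a, b)` with closure `T`. The weight
`φ = F₂W` of the first-order factors is recorded through its decay, and `V = (P')⁻¹PU`. -/
structure DarbouxData {N : ℕ} (a b : EReal) (S T : Set ℝ) (W F₂ F₁ F₀ P : ℝ → Mat N)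
    (U V : MatPoly N) : Prop where
  hab : a < b
  hS : S = {t : ℝ | a < (t : EReal) ∧ (t : EReal) < b}
  hST : S ⊆ T
  herm : ∀ t ∈ S, (W t).IsHermitian
  winv : ∀ t ∈ S, IsUnit (W t)
  mom : ∀ (n : ℕ) (i j : Fin N), IntegrableOn (fun t : ℝ => (t : ℂ) ^ n * W t i j) S
  diff : DiffOn S (fun t => F₂ t * W t)
  sym : ∀ t ∈ S, F₂ t * W t = W t * (F₂ t)ᴴ
  sym' : ∀ t ∈ S, (2 : ℂ) • matDeriv (fun s => F₂ s * W s) t = W t * (F₁ t)ᴴ + F₁ t * W t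
  decayL : ∀ r, IsRatOn T r → ∀ i j,
    Tendsto (fun t => r t * (F₂ t * W t) i j) (leftEnd a) (nhds 0)
  decayR : ∀ r, IsRatOn T r → ∀ i j,
    Tendsto (fun t => r t * (F₂ t * W t) i j) (rightEnd b) (nhds 0)
  pdiff : TwiceDiffOn S P
  pker : ∀ t ∈ S, secondOrd F₀ F₁ F₂ P t = 0
  pinv : ∀ t ∈ S, IsUnit (P t)
  pinv' : ∀ t ∈ S, IsUnit (matDeriv P t)
  compat : ∀ t ∈ S, ((1 / 2 : ℂ) • F₁ t + (P t)⁻¹ * matDeriv P t * F₂ t) * W t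
    = W t * ((1 / 2 : ℂ) • F₁ t + (P t)⁻¹ * matDeriv P t * F₂ t)ᴴ
  hV : ∀ t ∈ S, (matDeriv P t)⁻¹ * P t * mpEval U t = mpEval V t
  vinv : ∀ t ∈ T, IsUnit (mpEval V t)

/-- The rational function `UV⁻¹`, which agrees with `P⁻¹P'` on the open interval. -/
def logD {N : ℕ} (U V : MatPoly N) (t : ℝ) : Mat N := mpEval U t * (mpEval V t)⁻¹

/-- The first-order factor `y' - y P⁻¹P'` without the polynomial normalization `V`. -/
def reducedA {N : ℕ} (U V x : MatPoly N) (t : ℝ) : Mat N :=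
  mpEval (x.map Polynomial.derivative) t - mpEval x t * logD U V t

namespace DarbouxData

variable {N : ℕ} {a b : EReal} {S T : Set ℝ} {W F₂ F₁ F₀ P : ℝ → Mat N} {U V : MatPoly N} {t : ℝ}

lemma isOpen (H : DarbouxData a b S T W F₂ F₁ F₀ P U V) : IsOpen S :=
  H.hS ▸ isOpen_interval a b

lemma mem_nhds (H : DarbouxData a b S T W F₂ F₁ F₀ P U V) (ht : t ∈ S) : S ∈ nhds t :=
  H.isOpen.mem_nhds ht

lemma logD_eq (H : DarbouxData a b S T W F₂ F₁ F₀ P U V) (ht : t ∈ S) :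
    logD U V t = (P t)⁻¹ * matDeriv P t := by
  have hp := (Matrix.isUnit_iff_isUnit_det _).1 (H.pinv t ht)
  have hp' := (Matrix.isUnit_iff_isUnit_det _).1 (H.pinv' t ht)
  have hv := (Matrix.isUnit_iff_isUnit_det _).1 (H.vinv t (H.hST ht))
  have hU : mpEval U t = (P t)⁻¹ * matDeriv P t * mpEval V t := by
    rw [← H.hV t ht, mul_assoc, ← mul_assoc (matDeriv P t), ← mul_assoc (matDeriv P t),
      Matrix.mul_nonsing_inv _ hp', one_mul, ← mul_assoc, Matrix.nonsing_inv_mul _ hp, one_mul]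
  rw [logD, hU, mul_assoc, Matrix.mul_nonsing_inv _ hv, mul_one]

lemma mul_logD (H : DarbouxData a b S T W F₂ F₁ F₀ P U V) (ht : t ∈ S) :
    P t * logD U V t = matDeriv P t := by
  rw [H.logD_eq ht, ← mul_assoc,
    Matrix.mul_nonsing_inv _ ((Matrix.isUnit_iff_isUnit_det _).1 (H.pinv t ht)), one_mul]

lemma kfun_eq (H : DarbouxData a b S T W F₂ F₁ F₀ P U V) (ht : t ∈ S) :
    Kfun P U t = (mpEval V t)⁻¹ := by
  have hp' := (Matrix.isUnit_iff_isUnit_det _).1 (H.pinv' t ht)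
  rw [← H.hV t ht, Matrix.mul_inv_rev, Matrix.mul_inv_rev,
    Matrix.nonsing_inv_nonsing_inv _ hp', Kfun, mul_assoc]

lemma aop_mul_kfun (H : DarbouxData a b S T W F₂ F₁ F₀ P U V) (x : MatPoly N) (ht : t ∈ S) :
    Aop P U (mpEval x) t * Kfun P U t = reducedA U V x t := by
  have hv := (Matrix.isUnit_iff_isUnit_det _).1 (H.vinv t (H.hST ht))
  rw [H.kfun_eq ht, Aop, H.hV t ht, matDeriv_mpEval, sub_mul, mul_assoc,
    Matrix.mul_nonsing_inv _ hv, mul_one, mul_assoc, reducedA, logD]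

lemma isMatRatOn_logD (H : DarbouxData a b S T W F₂ F₁ F₀ P U V) : IsMatRatOn T (logD U V) :=
  (IsMatRatOn.poly U).mul (IsMatRatOn.inv H.vinv)

lemma isMatRatOn_reducedA (H : DarbouxData a b S T W F₂ F₁ F₀ P U V) (x : MatPoly N) :
    IsMatRatOn T (reducedA U V x) :=
  (IsMatRatOn.poly _).sub ((IsMatRatOn.poly x).mul H.isMatRatOn_logD)

lemma hasMD_logD (H : DarbouxData a b S T W F₂ F₁ F₀ P U V) (ht : t ∈ S) :
    HasMD (logD U V) (matDeriv (logD U V) t) t :=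
  DiffOn.hasMD (fun i j _ hs => (H.isMatRatOn_logD i j).differentiableAt H.isOpen H.hST hs) ht

/-- The derivative of `(y' - y P⁻¹P')F₂W`, corrected by the term making `ℬ`, is `D(y) W`. -/
lemma hasMD_reducedA_mul (H : DarbouxData a b S T W F₂ F₁ F₀ P U V) (x : MatPoly N)
    (ht : t ∈ S) : ∃ G', HasMD (fun s => reducedA U V x s * (F₂ s * W s)) G' t ∧
      G' + reducedA U V x t * (F₂ t * W t) * (logD U V t)ᴴ
        = secondOrd F₀ F₁ F₂ (mpEval x) t * W t := by
  have hF := H.hasMD_logD ht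
  refine ⟨_, ((hasMD_mpEval _ t).sub ((hasMD_mpEval x t).mul hF)).mul (H.diff.hasMD ht), ?_⟩
  have hPP : matDeriv P t * logD U V t + P t * matDeriv (logD U V) t
      = matDeriv (matDeriv P) t := by
    have h := ((H.pdiff.1.hasMD ht).mul hF).congr
      (g := matDeriv P) (by filter_upwards [H.mem_nhds ht] with s hs using (H.mul_logD hs).symm)
    exact h.matDeriv_eq.symm
  have hc := H.compat t ht
  rw [← H.logD_eq ht] at hc
  have := intertwine_alg (mpEval x t) (mpEval (x.map Polynomial.derivative) t)
    (mpEval ((x.map Polynomial.derivative).map Polynomial.derivative) t)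
    rfl (H.sym t ht) (H.sym' t ht) hc (H.pinv t ht) (H.mul_logD ht) hPP (H.pker t ht)
  rw [secondOrd, matDeriv_mpEval, matDeriv_mpEval]
  exact this

/-- The factorization `ℬ ∘ 𝒜 = D` on matrix polynomials. -/
lemma bop_aop (H : DarbouxData a b S T W F₂ F₁ F₀ P U V) (x : MatPoly N) (ht : t ∈ S) :
    Bop W P F₂ U (Aop P U (mpEval x)) t = secondOrd F₀ F₁ F₂ (mpEval x) t := by
  obtain ⟨G', hG, hG'⟩ := H.hasMD_reducedA_mul x ht
  have hw := (Matrix.isUnit_iff_isUnit_det _).1 (H.winv t ht)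
  have hd : matDeriv (fun s => Aop P U (mpEval x) s * Kfun P U s * F₂ s * W s) t = G' := by
    refine (hG.congr ?_).matDeriv_eq
    filter_upwards [H.mem_nhds ht] with s hs
    rw [H.aop_mul_kfun x hs, mul_assoc]
  rw [Bop, hd, H.aop_mul_kfun x ht, ← H.logD_eq ht, mul_assoc _ (F₂ t), hG', mul_assoc,
    Matrix.mul_nonsing_inv _ hw, mul_one]

/-- Since `ℬ ∘ 𝒜 = D`, the operator `𝒟 = 𝒜 ∘ ℬ` satisfies `𝒟 ∘ 𝒜 = 𝒜 ∘ D`. -/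
lemma dcal_aop (H : DarbouxData a b S T W F₂ F₁ F₀ P U V) {x z : MatPoly N}
    (hxz : ∀ s ∈ S, secondOrd F₀ F₁ F₂ (mpEval x) s = mpEval z s) (ht : t ∈ S) :
    Dcal W P F₂ U (Aop P U (mpEval x)) t = Aop P U (mpEval z) t := by
  have h : ∀ s ∈ S, Bop W P F₂ U (Aop P U (mpEval x)) s = mpEval z s :=
    fun s hs => (H.bop_aop x hs).trans (hxz s hs)
  have hd := matDeriv_congr (t := t)
    (show Bop W P F₂ U (Aop P U (mpEval x)) =ᶠ[nhds t] mpEval z by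
      filter_upwards [H.mem_nhds ht] with s hs using h s hs)
  rw [Dcal, Aop, hd, h t ht, Aop]

lemma aop_wexc_aop (H : DarbouxData a b S T W F₂ F₁ F₀ P U V) (x y : MatPoly N) (ht : t ∈ S) :
    Aop P U (mpEval x) t * Wexc W P F₂ U t * (Aop P U (mpEval y) t)ᴴ
      = reducedA U V x t * (F₂ t * W t) * (reducedA U V y t)ᴴ := by
  rw [← H.aop_mul_kfun x ht, ← H.aop_mul_kfun y ht, Wexc, Matrix.conjTranspose_mul]
  simp only [mul_assoc]

lemma integrableOn_poly (H : DarbouxData a b S T W F₂ F₁ F₀ P U V) (x y : MatPoly N)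
    (i j : Fin N) : IntegrableOn (fun t => (mpEval x t * W t * (mpEval y t)ᴴ) i j) S := by
  refine integrableOn_sesq (R := fun r => ∃ p : Polynomial ℂ, r = fun t : ℝ => p.eval (t : ℂ))
    ?_ (fun i j k l => ⟨x i k * (y j l).map (starRingEnd ℂ), ?_⟩) i j
  · rintro _ ⟨p, rfl⟩ k l
    exact integrableOn_poly_mul (fun n => H.mom n k l) p
  · funext t
    rw [Polynomial.eval_mul, eval_map_conj]
    rfl

/-- Integration by parts: the form of `𝒲` on the range of `𝒜` is minus the form of `W`
composed with `D`. The boundary terms vanish by the decay of `F₂W`. -/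
lemma integral_aop (H : DarbouxData a b S T W F₂ F₁ F₀ P U V) {x z : MatPoly N}
    (hxz : ∀ s ∈ S, secondOrd F₀ F₁ F₂ (mpEval x) s = mpEval z s) (y : MatPoly N)
    (i j : Fin N) :
    ∫ t in S, (Aop P U (mpEval x) t * Wexc W P F₂ U t * (Aop P U (mpEval y) t)ᴴ) i j
      = -∫ t in S, (mpEval z t * W t * (mpEval y t)ᴴ) i j := by
  have hS := H.hS
  have hEx := H.isMatRatOn_reducedA x
  have hEy := H.isMatRatOn_reducedA y
  have hi1 : IntegrableOn (fun t => (reducedA U V x t * (F₂ t * W t) * (reducedA U V y t)ᴴ) i j)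
      S := by
    refine integrableOn_sesq (R := IsRatOn T) ?_ (fun i j k l => (hEx i k).mul (hEy j l).star) i j
    have hdiff := H.diff
    have hST := H.hST
    rw [hS] at hdiff hST ⊢
    exact integrableOn_rat_mul H.hab hdiff hST H.decayL H.decayR
  have hi2 := H.integrableOn_poly z y i j
  have hder : ∀ t ∈ S, HasDerivAt
      (fun s => (reducedA U V x s * (F₂ s * W s) * (mpEval y s)ᴴ) i j)
      ((mpEval z t * W t * (mpEval y t)ᴴ) i j
        + (reducedA U V x t * (F₂ t * W t) * (reducedA U V y t)ᴴ) i j) t := by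
    intro t ht
    obtain ⟨G', hG, hG'⟩ := H.hasMD_reducedA_mul x ht
    rw [hxz t ht] at hG'
    have h := hG.mul (hasMD_mpEval y t).conjTranspose i j
    convert h using 1
    rw [← Matrix.add_apply, ← hG']
    refine congrFun (congrFun ?_ i) j
    conv_lhs => rw [reducedA.eq_def U V y, Matrix.conjTranspose_sub, Matrix.conjTranspose_mul]
    noncomm_ring
  have h0 : ∫ t in S, ((mpEval z t * W t * (mpEval y t)ᴴ) i j
      + (reducedA U V x t * (F₂ t * W t) * (reducedA U V y t)ᴴ) i j) = 0 := by
    have hadd := hi2.add hi1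
    rw [hS] at hder hadd ⊢
    exact integral_deriv_eq_zero H.hab (fun t h1 h2 => hder t ⟨h1, h2⟩) hadd
      (tendsto_sesq H.decayL hEx (IsMatRatOn.poly y) i j)
      (tendsto_sesq H.decayR hEx (IsMatRatOn.poly y) i j)
  rw [integral_add hi2 hi1] at h0
  rw [setIntegral_congr_fun H.isOpen.measurableSet fun t ht =>
    congrFun (congrFun (H.aop_wexc_aop x y ht) i) j]
  exact eq_neg_of_add_eq_zero_right h0

/-- Conjugating `integral_aop`: the Hermitian weights allow `D` to act on the second argument. -/
lemma integral_aop' (H : DarbouxData a b S T W F₂ F₁ F₀ P U V) {x z : MatPoly N}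
    (hxz : ∀ s ∈ S, secondOrd F₀ F₁ F₂ (mpEval x) s = mpEval z s) (y : MatPoly N)
    (i j : Fin N) :
    ∫ t in S, (Aop P U (mpEval y) t * Wexc W P F₂ U t * (Aop P U (mpEval x) t)ᴴ) i j
      = -∫ t in S, (mpEval y t * W t * (mpEval z t)ᴴ) i j := by
  have swap : ∀ {M f g : ℝ → Mat N}, (∀ t ∈ S, (M t)ᴴ = M t) →
      ∫ t in S, (f t * M t * (g t)ᴴ) i j
        = (starRingEnd ℂ) (∫ t in S, (g t * M t * (f t)ᴴ) j i) := by
    intro M f g hM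
    rw [← integral_conj]
    refine setIntegral_congr_fun H.isOpen.measurableSet fun t ht => ?_
    have : f t * M t * (g t)ᴴ = (g t * M t * (f t)ᴴ)ᴴ := by
      simp only [Matrix.conjTranspose_mul, Matrix.conjTranspose_conjTranspose, hM t ht, mul_assoc]
    exact congrFun (congrFun this i) j
  have hφ : ∀ t ∈ S, (F₂ t * W t)ᴴ = F₂ t * W t := fun t ht => by
    rw [Matrix.conjTranspose_mul, (H.herm t ht).eq, ← H.sym t ht]
  rw [swap (M := Wexc W P F₂ U), swap (M := W) (fun t ht => (H.herm t ht).eq),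
    H.integral_aop hxz y j i, map_neg]
  intro t ht
  simp only [Wexc, Matrix.conjTranspose_mul, Matrix.conjTranspose_conjTranspose, mul_assoc]
  rw [← mul_assoc (W t)ᴴ, ← Matrix.conjTranspose_mul, hφ t ht, mul_assoc]

end DarbouxData

/-! ### The span of the transformed polynomials -/

lemma aop_sum {N : ℕ} (P : ℝ → Mat N) (U : MatPoly N) (Pn : ℕ → MatPoly N) (s : Finset ℕ)
    (A : ℕ → Mat N) (t : ℝ) :
    Aop P U (mpEval (∑ n ∈ s, (A n).map Polynomial.C * Pn n)) t
      = ∑ n ∈ s, A n * Aop P U (mpEval (Pn n)) t := by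
  have hd : (∑ n ∈ s, (A n).map Polynomial.C * Pn n).map Polynomial.derivative
      = ∑ n ∈ s, (A n).map Polynomial.C * (Pn n).map Polynomial.derivative := by
    ext1 i j
    simp [Matrix.sum_apply, Matrix.mul_apply]
  simp only [Aop, matDeriv_mpEval, hd, mpEval_sum, mpEval_const_mul, Finset.sum_mul, mul_sub,
    Finset.sum_sub_distrib, mul_assoc]

lemma secondOrd_sum {N : ℕ} {F₀ F₁ F₂ : ℝ → Mat N} {Pn : ℕ → MatPoly N} {Γ : ℕ → Mat N}
    {s : Finset ℕ} {t : ℝ} (A : ℕ → Mat N)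
    (h : ∀ n ∈ s, secondOrd F₀ F₁ F₂ (mpEval (Pn n)) t = Γ n * mpEval (Pn n) t) :
    secondOrd F₀ F₁ F₂ (mpEval (∑ n ∈ s, (A n).map Polynomial.C * Pn n)) t
      = mpEval (∑ n ∈ s, (A n * Γ n).map Polynomial.C * Pn n) t := by
  have hd : ∀ Q : ℕ → MatPoly N,
      (∑ n ∈ s, (A n).map Polynomial.C * Q n).map Polynomial.derivative
      = ∑ n ∈ s, (A n).map Polynomial.C * (Q n).map Polynomial.derivative := by
    intro Q
    ext1 i j
    simp [Matrix.sum_apply, Matrix.mul_apply]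
  simp only [secondOrd, matDeriv_mpEval, hd, mpEval_sum, mpEval_const_mul, Finset.sum_mul] at h ⊢
  rw [← Finset.sum_add_distrib, ← Finset.sum_add_distrib]
  refine Finset.sum_congr rfl fun n hn => ?_
  rw [mul_assoc (A n) (Γ n), ← h n hn]
  simp only [mul_add, mul_assoc]

/-- Under the hypotheses of the quasi-Darboux scheme with a kernel seed
`P` of `D` satisfying the compatibility condition, the polynomials `𝒫ₙ = 𝒜(Pₙ)` are
orthogonal with respect to the exceptional weight `𝒲 = (U⁻¹P⁻¹P')F₂W(U⁻¹P⁻¹P')*`,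
eigenfunctions of `𝒟 = 𝒜 ∘ ℬ`, and `𝒟` is symmetric with respect to `(𝒲, 𝔸)` where `𝔸`
is the left linear span of the `𝒫ₙ`. -/
theorem quasi_darboux_exceptional_polynomials
    (N : ℕ) (a b : EReal) (hab : a < b)
    (S : Set ℝ) (hS : S = {t : ℝ | a < (t : EReal) ∧ (t : EReal) < b})
    (Scl : Set ℝ) (hScl : Scl = {t : ℝ | a ≤ (t : EReal) ∧ (t : EReal) ≤ b})
    (W : ℝ → Mat N)
    (hWsmooth : ∀ (i j : Fin N), ContDiffOn ℝ (⊤ : ℕ∞) (fun t => W t i j) S)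
    (hHerm : ∀ t ∈ S, (W t).IsHermitian)
    (hWinv : ∀ t ∈ Scl, IsUnit (W t))
    (hMom : ∀ (n : ℕ) (i j : Fin N), IntegrableOn (fun t : ℝ => (t : ℂ) ^ n * W t i j) S)
    (F₂ F₁ F₀ : ℝ → Mat N)
    (hrat2 : IsMatRatOn Scl F₂) (hrat1 : IsMatRatOn Scl F₁) (hrat0 : IsMatRatOn Scl F₀)
    (hF₂inv : ∀ t ∈ S, IsUnit (F₂ t))
    (heqF₂W : ∀ t ∈ S, F₂ t * W t = W t * (F₂ t)ᴴ)
    (heqF₁W : ∀ t ∈ S, (2 : ℂ) • matDeriv (fun s => F₂ s * W s) t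
        = W t * (F₁ t)ᴴ + F₁ t * W t)
    (hbda : ∀ p : ℝ → Mat N, IsMatRatOn Scl p → ∀ (i j : Fin N),
      Tendsto (fun t => (p t * (F₂ t * W t)ᴴ) i j) (leftEnd a) (nhds 0))
    (hbdb : ∀ p : ℝ → Mat N, IsMatRatOn Scl p → ∀ (i j : Fin N),
      Tendsto (fun t => (p t * (F₂ t * W t)ᴴ) i j) (rightEnd b) (nhds 0))
    (X : Finset ℕ) (Pn : ℕ → MatPoly N) (Γ : ℕ → Mat N)
    (hdeg : ∀ n ∉ X, ∀ i j, ((Pn n) i j).degree ≤ (n : ℕ))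
    (hlead : ∀ n ∉ X, IsUnit (Matrix.of fun i j => ((Pn n) i j).coeff n))
    (horth : ∀ n ∉ X, ∀ m ∉ X, n ≠ m →
      (Matrix.of fun i j =>
        ∫ t in S, (mpEval (Pn n) t * W t * (mpEval (Pn m) t)ᴴ) i j) = (0 : Mat N))
    (heig : ∀ n ∉ X, ∀ t ∈ S,
      secondOrd F₀ F₁ F₂ (fun s => mpEval (Pn n) s) t = Γ n * mpEval (Pn n) t)
    (P : ℝ → Mat N)
    (hPdiff : TwiceDiffOn S P)
    (hPker : ∀ t ∈ S, secondOrd F₀ F₁ F₂ P t = 0)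
    (hPinv : ∀ t ∈ Scl, IsUnit (P t))
    (hP'inv : ∀ t ∈ S, IsUnit (matDeriv P t))
    (hlus : ∀ t ∈ S,
      ((1 / 2 : ℂ) • F₁ t + (P t)⁻¹ * matDeriv P t * F₂ t) * W t
        = W t * ((1 / 2 : ℂ) • F₁ t + (P t)⁻¹ * matDeriv P t * F₂ t)ᴴ)
    (U V : MatPoly N)
    (hV : ∀ t ∈ S, (matDeriv P t)⁻¹ * P t * mpEval U t = mpEval V t)
    (hVinv : ∀ t ∈ Scl, IsUnit (mpEval V t)) :
    -- (i) `𝒟` is symmetric with respect to `(𝒲, 𝔸)`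
    (∀ f ∈ leftSpanF (fun n => Aop P U (fun s => mpEval (Pn n) s)) X,
     ∀ g ∈ leftSpanF (fun n => Aop P U (fun s => mpEval (Pn n) s)) X,
      (Matrix.of fun i j =>
        ∫ t in S, (Dcal W P F₂ U f t * Wexc W P F₂ U t * (g t)ᴴ) i j)
      = (Matrix.of fun i j =>
        ∫ t in S, (f t * Wexc W P F₂ U t * (Dcal W P F₂ U g t)ᴴ) i j)) ∧
    -- (ii) the `𝒫ₙ = 𝒜(Pₙ)` are orthogonal with respect to `𝒲`
    (∀ n ∉ X, ∀ m ∉ X, n ≠ m →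
      (Matrix.of fun i j =>
        ∫ t in S, (Aop P U (fun s => mpEval (Pn n) s) t * Wexc W P F₂ U t
            * (Aop P U (fun s => mpEval (Pn m) s) t)ᴴ) i j) = (0 : Mat N)) ∧
    -- (iii) `𝒟(𝒫ₙ) = Γₙ 𝒫ₙ`
    (∀ n ∉ X, ∀ t ∈ S,
      Dcal W P F₂ U (Aop P U (fun s => mpEval (Pn n) s)) t
        = Γ n * Aop P U (fun s => mpEval (Pn n) s) t) := by
  have hST : S ⊆ Scl := by
    rw [hS, hScl]
    exact fun t ht => ⟨ht.1.le, ht.2.le⟩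
  have hSo : IsOpen S := hS ▸ isOpen_interval a b
  have hφs : ∀ t ∈ S, (F₂ t * W t)ᴴ = F₂ t * W t := fun t ht => by
    rw [Matrix.conjTranspose_mul, (hHerm t ht).eq, ← heqF₂W t ht]
  have hdiff : DiffOn S (fun t => F₂ t * W t) := by
    intro i j t ht
    have hF : HasMD F₂ (matDeriv F₂ t) t :=
      DiffOn.hasMD (fun i j _ hs => (hrat2 i j).differentiableAt hSo hST hs) ht
    have hW : HasMD W (matDeriv W t) t :=
      DiffOn.hasMD (fun i j _ hs => ((hWsmooth i j).differentiableOn (by simp)).differentiableAt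
        (hSo.mem_nhds hs)) ht
    exact (hF.mul hW i j).differentiableAt
  -- The matrix boundary condition for scalar matrices `p = r • 1`, read entrywise.
  have hdecay : ∀ L : Filter ℝ, (∀ᶠ t in L, t ∈ S) →
      (∀ p : ℝ → Mat N, IsMatRatOn Scl p → ∀ (i j : Fin N),
        Tendsto (fun t => (p t * (F₂ t * W t)ᴴ) i j) L (nhds 0)) →
      ∀ r, IsRatOn Scl r → ∀ i j, Tendsto (fun t => r t * (F₂ t * W t) i j) L (nhds 0) := by
    intro L hL hp r hr i j
    have hr1 : IsMatRatOn Scl (fun t => r t • (1 : Mat N)) := by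
      intro k l
      have h := hr.mul (IsRatOn.poly (Polynomial.C ((1 : Mat N) k l)))
      simpa using h
    refine (hp _ hr1 i j).congr' ?_
    filter_upwards [hL] with t ht
    rw [hφs t ht, Matrix.smul_mul, one_mul, Matrix.smul_apply, smul_eq_mul]
  have H : DarbouxData a b S Scl W F₂ F₁ F₀ P U V :=
    { hab := hab
      hS := hS
      hST := hST
      herm := hHerm
      winv := fun t ht => hWinv t (hST ht)
      mom := hMom
      diff := hdiff
      sym := heqF₂W
      sym' := heqF₁W
      decayL := hdecay _ (by rw [hS]; exact eventually_leftEnd hab) hbda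
      decayR := hdecay _ (by rw [hS]; exact eventually_rightEnd hab) hbdb
      pdiff := hPdiff
      pker := hPker
      pinv := fun t ht => hPinv t (hST ht)
      pinv' := hP'inv
      compat := hlus
      hV := hV
      vinv := hVinv }
  have hconst : ∀ n ∉ X, ∀ t ∈ S, secondOrd F₀ F₁ F₂ (mpEval (Pn n)) t
      = mpEval ((Γ n).map Polynomial.C * Pn n) t := fun n hn t ht => by
    rw [mpEval_const_mul]
    exact heig n hn t ht
  refine ⟨?_, ?_, ?_⟩
  · rintro f ⟨s, A, hs, rfl⟩ g ⟨s', A', hs', rfl⟩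
    have hf := funext fun t => aop_sum P U Pn s A t
    have hg := funext fun t => aop_sum P U Pn s' A' t
    have hsp : ∀ t ∈ S, _ := fun t ht => secondOrd_sum A fun n hn => heig n (hs n hn) t ht
    have hsq : ∀ t ∈ S, _ := fun t ht => secondOrd_sum A' fun n hn => heig n (hs' n hn) t ht
    have hfold : ∀ n, (fun t => mpEval (Pn n) t) = mpEval (Pn n) := fun _ => rfl
    simp only [hfold]
    rw [← hf, ← hg]
    ext i j
    simp only [Matrix.of_apply]
    -- Both sides equal `-∫ D(p) W D(q)*`, where `f = 𝒜(p)` and `g = 𝒜(q)`.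
    trans -∫ t in S, (mpEval (∑ n ∈ s, (A n * Γ n).map Polynomial.C * Pn n) t * W t
        * (mpEval (∑ n ∈ s', (A' n * Γ n).map Polynomial.C * Pn n) t)ᴴ) i j
    · rw [← H.integral_aop' hsq]
      refine setIntegral_congr_fun hSo.measurableSet fun t ht => ?_
      simp only [H.dcal_aop hsp ht, aop_sum]
    · rw [← H.integral_aop hsp]
      refine setIntegral_congr_fun hSo.measurableSet fun t ht => ?_
      simp only [H.dcal_aop hsq ht, aop_sum]
  · intro n hn m hm hnm
    ext i j
    simp only [Matrix.of_apply, Matrix.zero_apply]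
    refine (H.integral_aop (hconst n hn) (Pn m) i j).trans (neg_eq_zero.2 ?_)
    have h : ∀ t, (mpEval ((Γ n).map Polynomial.C * Pn n) t * W t * (mpEval (Pn m) t)ᴴ) i j
        = ∑ k, Γ n i k * (mpEval (Pn n) t * W t * (mpEval (Pn m) t)ᴴ) k j := fun t => by
      rw [mpEval_const_mul, mul_assoc, mul_assoc, ← mul_assoc (mpEval (Pn n) t), Matrix.mul_apply]
    simp only [h]
    rw [integral_finsetSum _ fun k _ => (H.integrableOn_poly (Pn n) (Pn m) k j).const_mul _]
    refine Finset.sum_eq_zero fun k _ => ?_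
    rw [integral_const_mul]
    have h0 := congrFun (congrFun (horth n hn m hm hnm) k) j
    simp only [Matrix.of_apply, Matrix.zero_apply] at h0
    rw [h0, mul_zero]
  · intro n hn t ht
    refine (H.dcal_aop (hconst n hn) ht).trans ?_
    have h := aop_sum P U Pn {n} Γ t
    simpa only [Finset.sum_singleton] using h
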